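/- arXiv:1307.4858 — 2 statements merged into one kernel-verified Lean document; each statement's English description precedes it below -/
import Mathlib

section
/- Let (X_1, …, X_n) be a stationary Markov chain on {0,1} with p = P[X_1 = 1] ∈ (0,1), and let λ = P[X_2 = 1 | X_1 = 1] − P[X_2 = 1 | X_1 = 0] be the second eigenvalue of its transition kernel; assume |λ| < 1. Let V_n = Σ_{i=1}^n X_i and let V_n^s have the size-bias distribution of V_n, i.e. P[V_n^s = k] = k·P[V_n = k]/E[V_n] for every k. Then E[V_n^s] − E[V_n] = (1−p)(1+λ)/(1−λ) − 2(1−p)λ(1−λⁿ)/((1−λ)²·n); equivalently, Var(V_n) = n·p·(1−p)(1+λ)/(1−λ) − 2p(1−p)λ(1−λⁿ)/(1−λ)². -/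
/-!
Write `h(x) = 𝟙[x = 1] - p` and let `λ` be the second eigenvalue. Stationarity forces
`q x 1 = p + λ h(x)`, that is, `h` is an eigenfunction of the kernel: `E[h(X_{k+1}) | X_k] = λ h(X_k)`.
Conditioning on the first `n` coordinates (`chainExp_succ`) and expanding `V_{n+1} = V_n + X_{n+1}`
then closes up into a recursion for the moments (`chain_moments`):

* `E[h(X_n)] = 0` and `E[V_n] = n p`;
* `E[V_{n+1} h(X_{n+1})] = λ E[V_n h(X_n)] + p (1 - p)`, so `E[V_n h(X_n)] = p (1 - p) (1 - λⁿ) / (1 - λ)`;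
* `E[V_{n+1}²] = E[V_n²] + 2 p E[V_n] + 2 λ E[V_n h(X_n)] + p`, which sums to the variance formula.

The size-bias expectation `E[V_n²] / E[V_n] - E[V_n]` is `Var(V_n) / (n p)`.
-/

/-- The probability of the trajectory `f = (X_1, …, X_n)` (as `f 0, …, f (n-1)`) for a
Markov chain with initial distribution `μ0` and transition kernel `q`. -/
noncomputable def chainProb (n : ℕ) (μ0 : Bool → ℝ) (q : Bool → Bool → ℝ)
    (f : Fin n → Bool) : ℝ :=
  (if h : 0 < n then μ0 (f ⟨0, h⟩) else 1) *
    ∏ k ∈ Finset.range (n - 1),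
      if h : k + 1 < n then q (f ⟨k, Nat.lt_of_succ_lt h⟩) (f ⟨k + 1, h⟩) else 1

/-- `V_n(f) = Σ_i X_i`: the number of coordinates equal to `1` (`true`). -/
def vCount (n : ℕ) (f : Fin n → Bool) : ℕ :=
  (Finset.univ.filter fun i : Fin n => f i = true).card

/-- The stationary initial distribution putting mass `p` on `1` (`true`). -/
noncomputable def statInit (p : ℝ) : Bool → ℝ := fun b => if b then p else 1 - p

/-- The expectation of `g(X_1, …, X_n)` for the stationary chain. -/
noncomputable def chainExp (n : ℕ) (p : ℝ) (q : Bool → Bool → ℝ)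
    (g : (Fin n → Bool) → ℝ) : ℝ :=
  ∑ f : Fin n → Bool, chainProb n (statInit p) q f * g f

/-- The indicator of the state `1`, as a real number. -/
noncomputable def ind (b : Bool) : ℝ := if b then 1 else 0

/-- The centred last coordinate `h(X_n) = X_n - p` of a trajectory of length `n = m + 1`. -/
noncomputable def lastDev (p : ℝ) {m : ℕ} (f : Fin (m + 1) → Bool) : ℝ := ind (f (Fin.last m)) - p

lemma chainProb_snoc (m : ℕ) (μ : Bool → ℝ) (q : Bool → Bool → ℝ) (f : Fin (m + 1) → Bool)
    (b : Bool) :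
    chainProb (m + 2) μ q (Fin.snoc (α := fun _ => Bool) f b) =
      chainProb (m + 1) μ q f * q (f (Fin.last m)) b := by
  have hc : ∀ (k : ℕ) (hk : k < m + 1) (hk' : k < m + 2),
      Fin.snoc (α := fun _ => Bool) f b ⟨k, hk'⟩ = f ⟨k, hk⟩ := fun k hk hk' =>
    Fin.snoc_castSucc (α := fun _ => Bool) b f ⟨k, hk⟩
  have hl : ∀ hk' : m + 1 < m + 2, Fin.snoc (α := fun _ => Bool) f b ⟨m + 1, hk'⟩ = b := fun _ =>
    Fin.snoc_last (α := fun _ => Bool) b f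
  unfold chainProb
  rw [show m + 2 - 1 = m + 1 from rfl, show m + 1 - 1 = m from rfl, Finset.prod_range_succ,
    dif_pos (show 0 < m + 2 by omega), dif_pos (show 0 < m + 1 by omega),
    dif_pos (show m + 1 < m + 2 by omega), hl, hc 0 (by omega), hc m (by omega), mul_assoc]
  congr 2
  refine Finset.prod_congr rfl fun k hk => ?_
  have hk := Finset.mem_range.1 hk
  rw [dif_pos (show k + 1 < m + 2 by omega), dif_pos (show k + 1 < m + 1 by omega),
    hc k (by omega), hc (k + 1) (by omega)]

/-- The Markov property: the last coordinate is averaged against the kernel, given the others. -/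
lemma chainExp_succ (m : ℕ) (p : ℝ) (q : Bool → Bool → ℝ) (g : (Fin (m + 2) → Bool) → ℝ) :
    chainExp (m + 2) p q g = chainExp (m + 1) p q fun f =>
      q (f (Fin.last m)) true * g (Fin.snoc (α := fun _ => Bool) f true) +
        q (f (Fin.last m)) false * g (Fin.snoc (α := fun _ => Bool) f false) := by
  unfold chainExp
  rw [← (Fin.snocEquiv (fun _ : Fin (m + 2) => Bool)).sum_comp, Fintype.sum_prod_type,
    Fintype.sum_bool, ← Finset.sum_add_distrib]
  refine Finset.sum_congr rfl fun f _ => ?_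
  simp only [Fin.snocEquiv, Equiv.coe_fn_mk, chainProb_snoc]
  ring

lemma chainExp_one (p : ℝ) (q : Bool → Bool → ℝ) (g : (Fin (0 + 1) → Bool) → ℝ) :
    chainExp (0 + 1) p q g = p * g (fun _ => true) + (1 - p) * g (fun _ => false) := by
  unfold chainExp
  rw [← (Equiv.funUnique (Fin 1) Bool).symm.sum_comp, Fintype.sum_bool]
  simp [chainProb, statInit, Equiv.funUnique]
  rfl

lemma vCount_eq_sum (n : ℕ) (f : Fin n → Bool) : (vCount n f : ℝ) = ∑ i, ind (f i) := by
  simp [vCount, ind, Finset.sum_boole]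

lemma vCount_snoc (m : ℕ) (f : Fin (m + 1) → Bool) (b : Bool) :
    (vCount (m + 2) (Fin.snoc (α := fun _ => Bool) f b) : ℝ) = vCount (m + 1) f + ind b := by
  rw [vCount_eq_sum, vCount_eq_sum, Fin.sum_univ_castSucc]
  simp

lemma lastDev_snoc (m : ℕ) (p : ℝ) (f : Fin (m + 1) → Bool) (b : Bool) :
    lastDev p (Fin.snoc (α := fun _ => Bool) f b : Fin (m + 1 + 1) → Bool) = ind b - p := by
  simp [lastDev]

lemma chainExp_add (n : ℕ) (p : ℝ) (q : Bool → Bool → ℝ) (g h : (Fin n → Bool) → ℝ) :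
    chainExp n p q (fun f => g f + h f) = chainExp n p q g + chainExp n p q h := by
  simp [chainExp, mul_add, Finset.sum_add_distrib]

lemma chainExp_smul (n : ℕ) (p c : ℝ) (q : Bool → Bool → ℝ) (g : (Fin n → Bool) → ℝ) :
    chainExp n p q (fun f => c * g f) = c * chainExp n p q g := by
  simp [chainExp, Finset.mul_sum, mul_left_comm]

/-- The moments of the stationary chain, when the kernel is `q x 1 = p + l h(x)`. The variance
formula and the formula for `E[V_n h(X_n)]` are cleared of their denominators. -/
lemma chain_moments (p l : ℝ) (q : Bool → Bool → ℝ)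
    (ht : ∀ x, q x true = p + l * (ind x - p))
    (hf : ∀ x, q x false = 1 - (p + l * (ind x - p))) (m : ℕ) :
    chainExp (m + 1) p q (fun _ => 1) = 1 ∧
    chainExp (m + 1) p q (fun f => lastDev p f) = 0 ∧
    chainExp (m + 1) p q (fun f => (vCount (m + 1) f : ℝ)) = (m + 1) * p ∧
    (1 - l) * chainExp (m + 1) p q (fun f => (vCount (m + 1) f : ℝ) * lastDev p f) =
      p * (1 - p) * (1 - l ^ (m + 1)) ∧
    (1 - l) ^ 2 * (chainExp (m + 1) p q (fun f => (vCount (m + 1) f : ℝ) ^ 2) -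
        ((m + 1) * p) ^ 2) =
      (m + 1) * p * (1 - p) * (1 + l) * (1 - l) - 2 * p * (1 - p) * l * (1 - l ^ (m + 1)) := by
  induction m with
  | zero =>
    simp only [chainExp_one, vCount_eq_sum, lastDev, Fin.sum_univ_succ, Fin.sum_univ_zero, ind,
      if_true, Bool.false_eq_true, if_false, Nat.cast_zero]
    refine ⟨?_, ?_, ?_, ?_, ?_⟩ <;> ring
  | succ m ih =>
    obtain ⟨h1, h2, h3, h4, h5⟩ := ih
    have e1 : chainExp (m + 2) p q (fun _ => 1) = chainExp (m + 1) p q (fun _ => 1) := by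
      rw [chainExp_succ]
      congr 1; funext f
      rw [ht, hf]; ring
    have e2 : chainExp (m + 2) p q (fun f => lastDev p (m := m + 1) f) =
        l * chainExp (m + 1) p q (fun f => lastDev p f) := by
      rw [chainExp_succ, ← chainExp_smul]
      congr 1; funext f
      rw [ht, hf, lastDev_snoc, lastDev_snoc]
      simp only [lastDev, ind, if_true, Bool.false_eq_true, if_false]; ring
    have e3 : chainExp (m + 2) p q (fun f => (vCount (m + 2) f : ℝ)) =
        chainExp (m + 1) p q (fun f => (vCount (m + 1) f : ℝ)) +
          (p * chainExp (m + 1) p q (fun _ => 1) +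
            l * chainExp (m + 1) p q (fun f => lastDev p f)) := by
      rw [chainExp_succ, ← chainExp_smul, ← chainExp_smul, ← chainExp_add, ← chainExp_add]
      congr 1; funext f
      rw [ht, hf, vCount_snoc, vCount_snoc]
      simp only [lastDev, ind, if_true, Bool.false_eq_true, if_false]; ring
    have e4 : chainExp (m + 2) p q (fun f => (vCount (m + 2) f : ℝ) * lastDev p (m := m + 1) f) =
        l * chainExp (m + 1) p q (fun f => (vCount (m + 1) f : ℝ) * lastDev p f) +
          (p * (1 - p) * chainExp (m + 1) p q (fun _ => 1) +
            l * (1 - p) * chainExp (m + 1) p q (fun f => lastDev p f)) := by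
      rw [chainExp_succ, ← chainExp_smul, ← chainExp_smul, ← chainExp_smul, ← chainExp_add,
        ← chainExp_add]
      congr 1; funext f
      rw [ht, hf, vCount_snoc, vCount_snoc, lastDev_snoc, lastDev_snoc]
      simp only [lastDev, ind, if_true, Bool.false_eq_true, if_false]; ring
    have e5 : chainExp (m + 2) p q (fun f => (vCount (m + 2) f : ℝ) ^ 2) =
        chainExp (m + 1) p q (fun f => (vCount (m + 1) f : ℝ) ^ 2) +
          (2 * p * chainExp (m + 1) p q (fun f => (vCount (m + 1) f : ℝ)) +
          (2 * l * chainExp (m + 1) p q (fun f => (vCount (m + 1) f : ℝ) * lastDev p f) +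
          (p * chainExp (m + 1) p q (fun _ => 1) +
            l * chainExp (m + 1) p q (fun f => lastDev p f)))) := by
      rw [chainExp_succ, ← chainExp_smul, ← chainExp_smul, ← chainExp_smul, ← chainExp_smul,
        ← chainExp_add, ← chainExp_add, ← chainExp_add, ← chainExp_add]
      congr 1; funext f
      rw [ht, hf, vCount_snoc, vCount_snoc]
      simp only [lastDev, ind, if_true, Bool.false_eq_true, if_false]; ring
    rw [h1, h2] at e3 e4 e5
    rw [h1] at e1
    rw [h2] at e2
    rw [h3] at e3 e5
    refine ⟨e1, by rw [e2, mul_zero], ?_, ?_, ?_⟩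
    · rw [e3]; push_cast; ring
    · rw [e4]; linear_combination l * h4
    · rw [e5]; push_cast
      linear_combination h5 + 2 * l * (1 - l) * h4

/-- **Proposition A.5 (size-bias expectation).**  For a stationary two-state Markov
chain on `{0,1}` with `p = P[X_1 = 1] ∈ (0,1)` and second eigenvalue
`λ = P[X_2 = 1 | X_1 = 1] − P[X_2 = 1 | X_1 = 0]`, `|λ| < 1`, and `V_n = Σ X_i` with
size-biased version `V_n^s` (so `E[V_n^s] = E[V_n²]/E[V_n]`):
`E[V_n^s] − E[V_n] = (1−p)(1+λ)/(1−λ) − 2(1−p)λ(1−λⁿ)/((1−λ)² n)`. -/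
theorem size_bias_expectation (q : Bool → Bool → ℝ) (hq0 : ∀ x y, 0 ≤ q x y)
    (hq1 : ∀ x, q x true + q x false = 1)
    (p : ℝ) (hp0 : 0 < p) (hp1 : p < 1)
    (hstat : p * q true true + (1 - p) * q false true = p)
    (hlam : |q true true - q false true| < 1)
    (n : ℕ) (hn : 1 ≤ n) :
    chainExp n p q (fun f => (vCount n f : ℝ) ^ 2) /
          chainExp n p q (fun f => (vCount n f : ℝ)) -
        chainExp n p q (fun f => (vCount n f : ℝ)) =
      (1 - p) * (1 + (q true true - q false true)) / (1 - (q true true - q false true)) -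
        2 * (1 - p) * (q true true - q false true) *
            (1 - (q true true - q false true) ^ n) /
          ((1 - (q true true - q false true)) ^ 2 * n) := by
  obtain ⟨l, hl⟩ : ∃ l, l = q true true - q false true := ⟨_, rfl⟩
  rw [← hl] at hlam ⊢
  -- stationarity: `ind x - p` is an eigenfunction of the kernel with eigenvalue `l`
  have ht : ∀ x, q x true = p + l * (ind x - p) := by
    intro x
    cases x <;> simp only [ind, if_true, Bool.false_eq_true, if_false] <;> rw [hl] <;>
      linear_combination hstat
  have hf : ∀ x, q x false = 1 - (p + l * (ind x - p)) := fun x => by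
    linear_combination hq1 x - ht x
  obtain ⟨m, rfl⟩ : ∃ m, n = m + 1 := ⟨n - 1, by omega⟩
  obtain ⟨-, -, h3, -, h5⟩ := chain_moments p l q ht hf m
  have hl1 : 1 - l ≠ 0 := (sub_pos.2 (abs_lt.1 hlam).2).ne'
  have hm : (m : ℝ) + 1 ≠ 0 := by positivity
  rw [h3]
  push_cast
  generalize chainExp (m + 1) p q (fun f => (vCount (m + 1) f : ℝ) ^ 2) = A at h5 ⊢
  have hp : p ≠ 0 := hp0.ne'
  field_simp
  linear_combination h5
end

section
/- Let (X_1, …, X_n) be a stationary reversible Markov chain on {0,1} with p = P[X_1 = 1] ∈ (0,1). Let (Y_1, …, Y_n) be an independent copy of the chain, and set β = P[X_2 ≠ Y_2 | X_1 = 1, Y_1 = 0]; assume β < 1. Let V_n = Σ_{i=1}^n X_i. Then there is a constant C, depending only on the transition kernel of the chain, such that for all n with Var(V_n) > 0: sup_h |E[h((V_n − E V_n)/√(Var V_n))] − E[h(Z)]| ≤ C/√n, where the supremum runs over all 1-Lipschitz functions h : ℝ → ℝ and Z is a standard normal random variable (i.e., the Wasserstein-1 distance between the normalized sum and the standard normal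 is at most C/√n). -/
open ProbabilityTheory

/-! ### The chain as a recursion on the first step -/

/-- `walkExp a b n f u` is `E f(X_1 + ⋯ + X_n)` for the chain that steps to `1` with probability
`a` from `1` and `b` from `0`, where `X_1 = 1` with probability `u`. -/
noncomputable def walkExp (a b : ℝ) : ℕ → (ℝ → ℝ) → ℝ → ℝ
  | 0, f, _ => f 0
  | n + 1, f, u => u * walkExp a b n (fun s => f (s + 1)) a + (1 - u) * walkExp a b n f b

lemma chainProb_cons (n : ℕ) (μ : Bool → ℝ) (q : Bool → Bool → ℝ) (x : Bool) (f : Fin n → Bool) :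
    chainProb (n + 1) μ q (Fin.cons x f) = μ x * chainProb n (q x) q f := by
  cases n with
  | zero => simp [chainProb]
  | succ m =>
    have h0 : (⟨0, Nat.succ_pos _⟩ : Fin (m + 2)) = 0 := rfl
    have h1 : ∀ (k : ℕ) (h : k + 1 < m + 2),
        (Fin.cons x f : Fin (m + 2) → Bool) ⟨k + 1, h⟩ = f ⟨k, Nat.lt_of_succ_lt_succ h⟩ :=
      fun k h => rfl
    have h2 : ∀ (h : 0 < m + 2), (Fin.cons x f : Fin (m + 2) → Bool) ⟨0, h⟩ = x := fun h => rfl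
    simp only [chainProb, Nat.add_sub_cancel, dite_true, h2, Nat.zero_lt_succ]
    rw [Finset.prod_range_succ']
    simp only [h1, h2]
    rw [dif_pos (by omega : 0 + 1 < m + 2), mul_comm (∏ k ∈ Finset.range m, _)]
    congr 2
    refine Finset.prod_congr rfl fun k hk => ?_
    have := Finset.mem_range.1 hk
    rw [dif_pos (by omega), dif_pos (by omega)]

lemma vCount_cons (n : ℕ) (x : Bool) (f : Fin n → Bool) :
    vCount (n + 1) (Fin.cons x f) = (if x then 1 else 0) + vCount n f := by
  simp only [vCount, Finset.card_filter, Fin.sum_univ_succ, Fin.cons_zero, Fin.cons_succ]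

/-- The path sums in the statement are values of `walkExp`: condition on the first coordinate. -/
lemma sum_chainProb (q : Bool → Bool → ℝ) (hq1 : ∀ x, q x true + q x false = 1) (n : ℕ) :
    ∀ (μ : Bool → ℝ) (_ : μ true + μ false = 1) (g : ℝ → ℝ),
      ∑ f : Fin n → Bool, chainProb n μ q f * g (vCount n f) =
        walkExp (q true true) (q false true) n g (μ true) := by
  induction n with
  | zero => intro μ _ g; simp [chainProb, vCount, walkExp]
  | succ n ih =>
    intro μ hμ g
    rw [← (Fin.consEquiv fun _ : Fin (n + 1) => Bool).sum_comp, Fintype.sum_prod_type]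
    have hc : ∀ (x : Bool) (y : Fin n → Bool),
        (Fin.consEquiv fun _ : Fin (n + 1) => Bool) (x, y) = Fin.cons x y := fun _ _ => rfl
    simp only [hc, chainProb_cons, vCount_cons, Fintype.sum_bool, walkExp]
    rw [← ih _ (hq1 _), ← ih _ (hq1 _), Finset.mul_sum, Finset.mul_sum,
      show 1 - μ true = μ false by linarith]
    simp [mul_assoc, add_comm]

lemma walkExp_lin (a b c d : ℝ) (n : ℕ) : ∀ (f g : ℝ → ℝ) (u : ℝ),
    walkExp a b n (fun s => c * f s + d * g s) u =
      c * walkExp a b n f u + d * walkExp a b n g u := by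
  induction n with
  | zero => intro f g u; rfl
  | succ n ih =>
    intro f g u
    simp only [walkExp]
    rw [ih f g, ih (fun s => f (s + 1)) (fun s => g (s + 1))]
    ring

lemma walkExp_abs_le {a b : ℝ} (ha : a ∈ Set.Icc (0 : ℝ) 1) (hb : b ∈ Set.Icc (0 : ℝ) 1)
    {K : ℝ} (n : ℕ) : ∀ (f : ℝ → ℝ) (_ : ∀ s, |f s| ≤ K) (u : ℝ) (_ : u ∈ Set.Icc (0 : ℝ) 1),
    |walkExp a b n f u| ≤ K := by
  induction n with
  | zero => intro f hf u _; exact hf 0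
  | succ n ih =>
    intro f hf u hu
    have h1 := abs_le.1 (ih (fun s => f (s + 1)) (fun s => hf _) a ha)
    have h2 := abs_le.1 (ih f hf b hb)
    obtain ⟨hu0, hu1⟩ := hu
    rw [walkExp, abs_le]
    constructor <;> nlinarith

lemma walkExp_sub (a b : ℝ) (n : ℕ) (f g : ℝ → ℝ) (u : ℝ) :
    walkExp a b n (fun s => f s - g s) u = walkExp a b n f u - walkExp a b n g u := by
  have := walkExp_lin a b 1 (-1) n f g u
  simpa [sub_eq_add_neg] using this

/-! ### Influence of the first step -/

/-- The change of `E f(V)` over `n + 1` steps when the first step is switched from `0` to `1`. -/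
noncomputable def jump (a b : ℝ) (n : ℕ) (f : ℝ → ℝ) : ℝ :=
  walkExp a b n (fun s => f (s + 1)) a - walkExp a b n f b

lemma walkExp_succ (a b : ℝ) (n : ℕ) (f : ℝ → ℝ) (u : ℝ) :
    walkExp a b (n + 1) f u = walkExp a b n f b + u * jump a b n f := by
  rw [walkExp, jump]; ring

/-- Replace `f(· + 1)` by `f` plus its difference; the two runs of the chain then differ only in
the law of their next step, which costs a factor `a - b`. -/
lemma jump_succ (a b : ℝ) (n : ℕ) (f : ℝ → ℝ) :
    jump a b (n + 1) f = (a - b) * jump a b n (fun s => f (s + 1)) +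
      walkExp a b (n + 1) (fun s => f (s + 1) - f s) b := by
  rw [walkExp_sub a b (n + 1) (fun s => f (s + 1)) f, jump, walkExp_succ, walkExp_succ, walkExp_succ]
  ring

/-- Here and below `L` stands for `1 / (1 - |a - b|)`, specified by the equation
`|a - b| * L + 1 = L`. -/
lemma jump_abs_le {a b L : ℝ} (ha : a ∈ Set.Icc (0 : ℝ) 1) (hb : b ∈ Set.Icc (0 : ℝ) 1)
    (hL1 : 1 ≤ L) (hL : |a - b| * L + 1 = L) {K : ℝ} (n : ℕ) :
    ∀ (f : ℝ → ℝ) (_ : ∀ s, |f (s + 1) - f s| ≤ K), |jump a b n f| ≤ L * K := by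
  induction n with
  | zero =>
    intro f hf
    have := hf 0
    have hK : 0 ≤ K := (abs_nonneg _).trans this
    simp only [jump, walkExp]
    nlinarith
  | succ n ih =>
    intro f hf
    rw [jump_succ]
    have h1 := ih (fun s => f (s + 1)) (fun s => hf _)
    have h2 := walkExp_abs_le ha hb (n + 1) _ hf b hb
    calc _ ≤ |a - b| * (L * K) + K := by
          refine (abs_add_le _ _).trans (add_le_add ?_ h2)
          rw [abs_mul]; gcongr
      _ = (|a - b| * L + 1) * K := by ring
      _ = L * K := by rw [hL]

lemma geom_abs_le {l L : ℝ} (hL1 : 1 ≤ L) (hL : |l| * L + 1 = L) (n : ℕ) :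
    |∑ k ∈ Finset.range n, l ^ k| ≤ L := by
  induction n with
  | zero => simp; linarith
  | succ n ih =>
    rw [geom_sum_succ]
    refine (abs_add_le _ _).trans ?_
    rw [abs_mul, abs_one, ← hL]
    gcongr

/-- To first order the jump of `f` is a constant multiple of `E (Δf)(V)`, whatever the law `u` of
the first step. -/
lemma jump_approx {a b L : ℝ} (ha : a ∈ Set.Icc (0 : ℝ) 1) (hb : b ∈ Set.Icc (0 : ℝ) 1)
    (hL1 : 1 ≤ L) (hL : |a - b| * L + 1 = L) {K : ℝ} (n : ℕ) :
    ∀ (f : ℝ → ℝ) (_ : ∀ s, |(f (s + 1 + 1) - f (s + 1)) - (f (s + 1) - f s)| ≤ K)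
      (u : ℝ) (_ : u ∈ Set.Icc (0 : ℝ) 1),
      |jump a b n f - (∑ k ∈ Finset.range (n + 1), (a - b) ^ k) *
        walkExp a b (n + 1) (fun s => f (s + 1) - f s) u| ≤ (L + L ^ 2) * L * K := by
  -- By `jump_abs_le` for `Δf`, it is enough to compare with `n` steps started from the law `b`.
  have key : ∀ (n : ℕ) (f : ℝ → ℝ)
      (_ : ∀ s, |(f (s + 1 + 1) - f (s + 1)) - (f (s + 1) - f s)| ≤ K)
      (u : ℝ) (_ : u ∈ Set.Icc (0 : ℝ) 1), ∀ E : ℝ,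
      |jump a b n f - (∑ k ∈ Finset.range (n + 1), (a - b) ^ k) *
        walkExp a b n (fun s => f (s + 1) - f s) b| ≤ E →
      |jump a b n f - (∑ k ∈ Finset.range (n + 1), (a - b) ^ k) *
        walkExp a b (n + 1) (fun s => f (s + 1) - f s) u| ≤ E + L ^ 2 * K := by
    intro n f hf u hu E hE
    have h1 := jump_abs_le ha hb hL1 hL n (fun s => f (s + 1) - f s) hf
    have h2 := geom_abs_le hL1 hL (n + 1)
    rw [walkExp_succ]
    calc _ = |(jump a b n f - (∑ k ∈ Finset.range (n + 1), (a - b) ^ k) *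
        walkExp a b n (fun s => f (s + 1) - f s) b) -
          (∑ k ∈ Finset.range (n + 1), (a - b) ^ k) *
            (u * jump a b n (fun s => f (s + 1) - f s))| := by congr 1; ring
      _ ≤ E + L * (1 * (L * K)) := by
        refine (abs_sub _ _).trans (add_le_add hE ?_)
        rw [abs_mul, abs_mul, abs_of_nonneg hu.1]
        have hu0 := hu.1
        have hu1 := hu.2
        have h3 : 0 ≤ u * |jump a b n fun s => f (s + 1) - f s| := mul_nonneg hu0 (abs_nonneg _)
        gcongr
      _ = _ := by ring
  induction n with
  | zero =>
    intro f hf u hu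
    have hK : 0 ≤ K := (abs_nonneg _).trans (hf 0)
    refine (key 0 f hf u hu 0 ?_).trans ?_
    · simp [jump, walkExp]
    · nlinarith [mul_nonneg (sq_nonneg L) hK, mul_nonneg (mul_nonneg (sq_nonneg L) (by linarith : 0 ≤ L)) hK]
  | succ n ih =>
    intro f hf u hu
    have hK : 0 ≤ K := (abs_nonneg _).trans (hf 0)
    refine (key (n + 1) f hf u hu (|a - b| * ((L + L ^ 2) * L * K) + L * K) ?_).trans (le_of_eq ?_)
    · have h1 := ih (fun s => f (s + 1)) (fun s => hf _) b hb
      have h2 := walkExp_abs_le ha hb (n + 1) _ hf b hb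
      rw [walkExp_sub a b (n + 1) (fun s => f (s + 1 + 1) - f (s + 1)) (fun s => f (s + 1) - f s)] at h2
      have h3 := geom_abs_le hL1 hL (n + 1)
      have hl : |a - b| ≤ 1 := by nlinarith [abs_nonneg (a - b)]
      rw [jump_succ, geom_sum_succ]
      calc _ = |(a - b) * (jump a b n (fun s => f (s + 1)) -
            (∑ k ∈ Finset.range (n + 1), (a - b) ^ k) *
              walkExp a b (n + 1) (fun s => f (s + 1 + 1) - f (s + 1)) b) +
            (a - b) * ((∑ k ∈ Finset.range (n + 1), (a - b) ^ k) *
              (walkExp a b (n + 1) (fun s => f (s + 1 + 1) - f (s + 1)) b -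
              walkExp a b (n + 1) (fun s => f (s + 1) - f s) b))| := by congr 1; ring
        _ ≤ |a - b| * ((L + L ^ 2) * L * K) + 1 * (L * K) := by
          refine (abs_add_le _ _).trans (add_le_add ?_ ?_)
          · rw [abs_mul]; gcongr
          · rw [abs_mul, abs_mul]; gcongr
        _ = _ := by ring
    · linear_combination (L + L ^ 2) * K * hL

/-! ### The discrete Stein identity and the variance -/

/-- The coefficient of `E (Δf)(V)` in the Stein identity. It is given by the law of total variance
over the first step, since `∑ k < n + 1, (a - b) ^ k` is the effect of that step on the mean. -/
noncomputable def walkVar (a b : ℝ) : ℕ → ℝ → ℝ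
  | 0, _ => 0
  | n + 1, u => u * walkVar a b n a + (1 - u) * walkVar a b n b +
      (∑ k ∈ Finset.range (n + 1), (a - b) ^ k) ^ 2 * (u * (1 - u))

lemma walkVar_sub_le {a b L : ℝ} (ha : a ∈ Set.Icc (0 : ℝ) 1) (hb : b ∈ Set.Icc (0 : ℝ) 1)
    (hL1 : 1 ≤ L) (hL : |a - b| * L + 1 = L) (n : ℕ) :
    |walkVar a b n a - walkVar a b n b| ≤ L ^ 3 := by
  induction n with
  | zero => simp [walkVar]; positivity
  | succ n ih =>
    have h3 := geom_abs_le hL1 hL (n + 1)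
    obtain ⟨ha0, ha1⟩ := ha
    obtain ⟨hb0, hb1⟩ := hb
    have hv : |a * (1 - a) - b * (1 - b)| ≤ 1 := by
      rw [abs_le]; constructor <;> nlinarith
    calc _ = |(a - b) * (walkVar a b n a - walkVar a b n b) +
          (∑ k ∈ Finset.range (n + 1), (a - b) ^ k) ^ 2 * (a * (1 - a) - b * (1 - b))| := by
          simp only [walkVar]; congr 1; ring
      _ ≤ |a - b| * L ^ 3 + L ^ 2 * 1 := by
          refine (abs_add_le _ _).trans (add_le_add ?_ ?_)
          · rw [abs_mul]; gcongr
          · rw [abs_mul, abs_pow]; gcongr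
      _ = L ^ 3 := by linear_combination L ^ 2 * hL

/-- The Stein identity for a general law `u` of the first step; the second term is the mean of
`V - n p`, and vanishes for the stationary law `u = p`. -/
lemma walkExp_stein {a b L p : ℝ} (ha : a ∈ Set.Icc (0 : ℝ) 1) (hb : b ∈ Set.Icc (0 : ℝ) 1)
    (hL1 : 1 ≤ L) (hL : |a - b| * L + 1 = L) (hp : p * a + (1 - p) * b = p) {K : ℝ} (n : ℕ) :
    ∀ (f : ℝ → ℝ) (_ : ∀ s, |(f (s + 1 + 1) - f (s + 1)) - (f (s + 1) - f s)| ≤ K)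
      (u : ℝ) (_ : u ∈ Set.Icc (0 : ℝ) 1),
      |walkExp a b n (fun s => (s - n * p) * f s) u -
        (∑ k ∈ Finset.range n, (a - b) ^ k) * (u - p) * walkExp a b n f u -
        walkVar a b n u * walkExp a b n (fun s => f (s + 1) - f s) u| ≤
      n * ((L * ((L + L ^ 2) * L) + L ^ 3 * L) * K) := by
  induction n with
  | zero => intro f hf u hu; simp [walkExp, walkVar]
  | succ n ih =>
    intro f hf u hu
    have hK : 0 ≤ K := (abs_nonneg _).trans (hf 0)
    have e1 : walkExp a b n (fun s => (s + 1 - (n + 1 : ℕ) * p) * f (s + 1)) a =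
        walkExp a b n (fun s => (s - n * p) * f (s + 1)) a +
          (1 - p) * walkExp a b n (fun s => f (s + 1)) a := by
      have := walkExp_lin a b 1 (1 - p) n (fun s => (s - n * p) * f (s + 1)) (fun s => f (s + 1)) a
      rw [one_mul] at this
      rw [← this]; congr 1; funext s; push_cast; ring
    have e2 : walkExp a b n (fun s => (s - (n + 1 : ℕ) * p) * f s) b =
        walkExp a b n (fun s => (s - n * p) * f s) b - p * walkExp a b n f b := by
      have := walkExp_lin a b 1 (-p) n (fun s => (s - n * p) * f s) f b
      rw [one_mul] at this
      rw [sub_eq_add_neg, ← neg_mul, ← this]; congr 1; funext s; push_cast; ring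
    have i1 := ih (fun s => f (s + 1)) (fun s => hf _) a ha
    have i2 := ih f hf b hb
    have j1 := jump_approx ha hb hL1 hL n f hf u hu
    have j2 := jump_abs_le ha hb hL1 hL n (fun s => f (s + 1) - f s) hf
    have v := walkVar_sub_le ha hb hL1 hL n
    have g := geom_abs_le hL1 hL (n + 1)
    have ea : a - p = (a - b) * (1 - p) := by linear_combination hp
    have eb : b - p = -((a - b) * p) := by linear_combination hp
    obtain ⟨hu0, hu1⟩ := hu
    have hu2 : 0 ≤ 1 - u := by linarith
    have hu3 : u * (1 - u) ≤ 1 := by nlinarith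
    have hu4 : 0 ≤ u * (1 - u) := by positivity
    rw [ea] at i1
    rw [eb] at i2
    set R := (n : ℝ) * ((L * ((L + L ^ 2) * L) + L ^ 3 * L) * K) with hR
    set th := ∑ k ∈ Finset.range n, (a - b) ^ k with hth
    have hgs : ∑ k ∈ Finset.range (n + 1), (a - b) ^ k = (a - b) * th + 1 := geom_sum_succ
    set Th := ∑ k ∈ Finset.range (n + 1), (a - b) ^ k with hTh
    set I1 := walkExp a b n (fun s => (s - n * p) * f (s + 1)) a -
        th * ((a - b) * (1 - p)) * walkExp a b n (fun s => f (s + 1)) a -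
        walkVar a b n a * walkExp a b n (fun s => f (s + 1 + 1) - f (s + 1)) a with hI1
    set I2 := walkExp a b n (fun s => (s - n * p) * f s) b -
        th * (-((a - b) * p)) * walkExp a b n f b -
        walkVar a b n b * walkExp a b n (fun s => f (s + 1) - f s) b with hI2
    set J := jump a b n f - Th * walkExp a b (n + 1) (fun s => f (s + 1) - f s) u with hJ
    -- Conditioning on the first step gives the two inductive errors `I1`, `I2`. The mean terms
    -- recombine into `Th * (u - p) * E f(V)` plus a multiple of `jump f`, and averaging a product
    -- of two functions of the first step leaves their covariance as the last summand.
    calc _ = |u * I1 + (1 - u) * I2 + (Th * (u * (1 - u))) * J +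
          (u * (1 - u)) * ((walkVar a b n a - walkVar a b n b) *
            jump a b n (fun s => f (s + 1) - f s))| := by
          rw [hI1, hI2, hJ]
          simp only [walkExp, walkVar, jump]
          rw [e1, e2, ← hTh, hgs]
          congr 1; ring
      _ ≤ (u * R + (1 - u) * R + (L * 1) * ((L + L ^ 2) * L * K)) + 1 * (L ^ 3 * (L * K)) := by
          refine (abs_add_le _ _).trans (add_le_add ((abs_add_le _ _).trans (add_le_add
            ((abs_add_le _ _).trans (add_le_add ?_ ?_)) ?_)) ?_)
          · rw [abs_mul, abs_of_nonneg hu0]; gcongr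
          · rw [abs_mul, abs_of_nonneg hu2]; gcongr
          · rw [abs_mul, abs_mul, abs_of_nonneg hu4]; gcongr
          · rw [abs_mul, abs_of_nonneg hu4, abs_mul]; gcongr
      _ = _ := by rw [hR]; push_cast; ring

/-- Averaging the recursion over the stationary law shows that each step contributes at least
`(∑ k, (a - b) ^ k) ^ 2` times the stationary mean of the one-step conditional variance, which is
`p * (1 - p) * (1 - (a - b) ^ 2)`. -/
lemma walkVar_lower {a b L p : ℝ} (hp0 : 0 ≤ p) (hp1 : p ≤ 1)
    (hL1 : 1 ≤ L) (hL : |a - b| * L + 1 = L) (hp : p * a + (1 - p) * b = p) (n : ℕ) :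
    n * ((1 / (2 * L)) ^ 2 * (p * (1 - p) * (1 - (a - b) ^ 2))) ≤ walkVar a b n p := by
  have hL0 : 0 < L := by linarith
  have hl : |a - b| < 1 := by
    by_contra hcon
    push Not at hcon
    nlinarith
  have hlL : 1 - |a - b| = 1 / L := by field_simp; linarith
  have hth : ∀ n, (1 / (2 * L)) ^ 2 ≤ (∑ k ∈ Finset.range (n + 1), (a - b) ^ k) ^ 2 := by
    intro n
    have h1 := mul_neg_geom_sum (a - b) (n + 1)
    have h2 : (a - b) ^ (n + 1) ≤ |a - b| := by
      refine (le_abs_self _).trans ?_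
      rw [abs_pow]
      exact pow_le_of_le_one (abs_nonneg _) hl.le (by omega)
    have h3 := abs_lt.1 hl
    have h4 : 1 / L ≤ (1 - (a - b)) * ∑ k ∈ Finset.range (n + 1), (a - b) ^ k := by
      rw [h1, ← hlL]; linarith
    have h5 : 0 < 1 / L := by positivity
    refine pow_le_pow_left₀ (by positivity) ?_ 2
    have h6 : 1 / (2 * L) = (1 / L) / 2 := by field_simp
    rw [h6]
    have h7 : 0 < ∑ k ∈ Finset.range (n + 1), (a - b) ^ k := by
      by_contra hcon
      push Not at hcon
      nlinarith
    nlinarith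
  have ea : a = p + (a - b) * (1 - p) := by linear_combination hp
  have eb : b = p - (a - b) * p := by linear_combination hp
  have hw : p * (a * (1 - a)) + (1 - p) * (b * (1 - b)) = p * (1 - p) * (1 - (a - b) ^ 2) := by
    generalize a - b = l at *
    subst ea eb
    ring
  have hpp : 0 ≤ p * (1 - p) := mul_nonneg hp0 (by linarith)
  have hl2 : (a - b) ^ 2 ≤ 1 := by
    rw [← sq_abs]; exact pow_le_one₀ (abs_nonneg _) hl.le
  have hw0 : 0 ≤ p * (1 - p) * (1 - (a - b) ^ 2) := mul_nonneg hpp (by linarith)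
  have hA : ∀ n : ℕ, n * ((1 / (2 * L)) ^ 2 * (p * (1 - p) * (1 - (a - b) ^ 2))) ≤
      p * walkVar a b n a + (1 - p) * walkVar a b n b := by
    intro n
    induction n with
    | zero => simp [walkVar]
    | succ n ih =>
      have h1 := mul_le_mul_of_nonneg_right (hth n) hw0
      have h2 : p * walkVar a b (n + 1) a + (1 - p) * walkVar a b (n + 1) b =
          p * walkVar a b n a + (1 - p) * walkVar a b n b +
          (∑ k ∈ Finset.range (n + 1), (a - b) ^ k) ^ 2 * (p * (1 - p) * (1 - (a - b) ^ 2)) := by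
        rw [← hw]
        simp only [walkVar]
        linear_combination (walkVar a b n a - walkVar a b n b) * hp
      rw [h2]; push_cast; linarith
  cases n with
  | zero => simp [walkVar]
  | succ n =>
    have h1 := hA n
    have h2 : (1 / (2 * L)) ^ 2 * (p * (1 - p) * (1 - (a - b) ^ 2)) ≤
        (∑ k ∈ Finset.range (n + 1), (a - b) ^ k) ^ 2 * (p * (1 - p)) := by
      refine mul_le_mul (hth n) ?_ hw0 (sq_nonneg _)
      nlinarith [sq_nonneg (a - b)]
    simp only [walkVar]
    push_cast
    linarith

open MeasureTheory

/-! ### The Stein equation for Lipschitz test functions -/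

/-- The unnormalized standard Gaussian density. -/
noncomputable def gaussWeight (t : ℝ) : ℝ := Real.exp (-(1 / 2) * t ^ 2)

lemma gaussWeight_pos (t : ℝ) : 0 < gaussWeight t := Real.exp_pos _

lemma gaussWeight_neg (t : ℝ) : gaussWeight (-t) = gaussWeight t := by simp [gaussWeight]

lemma gaussWeight_zero : gaussWeight 0 = 1 := by simp [gaussWeight]

lemma gaussWeight_continuous : Continuous gaussWeight := by unfold gaussWeight; fun_prop

lemma gaussWeight_hasDerivAt (t : ℝ) : HasDerivAt gaussWeight (-t * gaussWeight t) t := by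
  have h : HasDerivAt (fun t : ℝ => -(1 / 2) * t ^ 2) (-t) t := by
    convert! (hasDerivAt_pow 2 t).const_mul (-(1 / 2 : ℝ)) using 1
    norm_num; ring
  have := h.exp
  rwa [mul_comm] at this

lemma integrable_gaussWeight : Integrable gaussWeight :=
  integrable_exp_neg_mul_sq (by norm_num : (0 : ℝ) < 1 / 2)

lemma integrable_id_mul_gaussWeight : Integrable fun t => t * gaussWeight t :=
  integrable_mul_exp_neg_mul_sq (by norm_num : (0 : ℝ) < 1 / 2)

lemma integrable_sq_mul_gaussWeight : Integrable fun t => t ^ 2 * gaussWeight t := by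
  have := integrable_rpow_mul_exp_neg_mul_sq (by norm_num : (0 : ℝ) < 1 / 2) (s := 2) (by norm_num)
  simpa [gaussWeight] using this

lemma integrable_lip_mul_gaussWeight {k : ℝ → ℝ} (hk : LipschitzWith 1 k) :
    Integrable fun t => k t * gaussWeight t := by
  refine ((integrable_gaussWeight.const_mul |k 0|).add
    integrable_id_mul_gaussWeight.abs).mono'
    (hk.continuous.mul gaussWeight_continuous).aestronglyMeasurable (ae_of_all _ fun t => ?_)
  have h1 := hk.dist_le_mul t 0
  simp only [Real.dist_eq, NNReal.coe_one, one_mul, sub_zero] at h1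
  have h2 : |k t| ≤ |k 0| + |t| := by
    have := abs_sub_abs_le_abs_sub (k t) (k 0); linarith
  rw [Real.norm_eq_abs, abs_mul, Pi.add_apply, abs_mul, abs_of_pos (gaussWeight_pos t), ← add_mul]
  exact mul_le_mul_of_nonneg_right h2 (gaussWeight_pos t).le

lemma integral_comp_eq_gaussWeight (h : ℝ → ℝ) :
    ∫ t, h t ∂(gaussianReal 0 1) = (√(2 * Real.pi))⁻¹ * ∫ t, h t * gaussWeight t := by
  rw [integral_gaussianReal_eq_integral_smul one_ne_zero, ← integral_const_mul]
  congr 1; funext t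
  simp only [gaussianPDFReal, gaussWeight, smul_eq_mul, NNReal.coe_one, mul_one, sub_zero]
  rw [show -t ^ 2 / 2 = -(1 / 2) * t ^ 2 by ring]; ring

lemma integral_Ioi_id_gaussWeight (x : ℝ) :
    ∫ t in Set.Ioi x, t * gaussWeight t = gaussWeight x := by
  have hint := integrable_id_mul_gaussWeight.neg.integrableOn (s := Set.Ioi x)
  have h := integral_Ioi_of_hasDerivAt_of_tendsto' (a := x) (f := gaussWeight)
    (f' := fun t => -t * gaussWeight t) (m := 0) (fun t _ => gaussWeight_hasDerivAt t)
    (by convert! hint using 2; simp) ?_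
  · have h2 : ∫ t in Set.Ioi x, -t * gaussWeight t = -∫ t in Set.Ioi x, t * gaussWeight t := by
      rw [← integral_neg]; simp
    linarith
  · refine tendsto_zero_of_hasDerivAt_of_integrableOn_Ioi (a := x) (fun t _ => gaussWeight_hasDerivAt t)
      (by convert! hint using 2; simp) integrable_gaussWeight.integrableOn

lemma integral_Ioi_sq_gaussWeight (x : ℝ) :
    ∫ t in Set.Ioi x, t ^ 2 * gaussWeight t = x * gaussWeight x + ∫ t in Set.Ioi x, gaussWeight t := by
  have hd : ∀ t ∈ Set.Ici x, HasDerivAt (fun t => t * gaussWeight t)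
      (gaussWeight t - t ^ 2 * gaussWeight t) t := fun t _ => by
    convert! (hasDerivAt_id t).mul (gaussWeight_hasDerivAt t) using 1
    simp only [id]; ring
  have hint := (integrable_gaussWeight.sub integrable_sq_mul_gaussWeight).integrableOn
    (s := Set.Ioi x)
  have h := integral_Ioi_of_hasDerivAt_of_tendsto' (m := 0) hd hint
    (tendsto_zero_of_hasDerivAt_of_integrableOn_Ioi (fun t ht => hd t (Set.mem_Ici_of_Ioi ht)) hint
      integrable_id_mul_gaussWeight.integrableOn)
  rw [integral_sub integrable_gaussWeight.integrableOn
    integrable_sq_mul_gaussWeight.integrableOn] at h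
  linarith

/-- Estimates of Mills ratio type. They follow from the tail moments
`∫ (t - x) φ(t) dt = φ(x) - x G` and `∫ (t - x)² φ(t) dt` over `t > x` being nonnegative. -/
lemma mills {x : ℝ} (hx : 0 ≤ x) {G : ℝ} (hG : G = ∫ t in Set.Ioi x, gaussWeight t) :
    0 ≤ G ∧ x * G ≤ gaussWeight x ∧ G ≤ 3 * gaussWeight x ∧
      x ^ 2 * (gaussWeight x - x * G) ≤ gaussWeight x := by
  have i0 := integrable_gaussWeight.integrableOn (s := Set.Ioi x)
  have i1 := integrable_id_mul_gaussWeight.integrableOn (s := Set.Ioi x)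
  have i2 := integrable_sq_mul_gaussWeight.integrableOn (s := Set.Ioi x)
  have e1 := integral_Ioi_id_gaussWeight x
  have e2 := integral_Ioi_sq_gaussWeight x
  have hw := gaussWeight_pos x
  have h0 : 0 ≤ G := by
    rw [hG]; exact integral_nonneg fun t => (gaussWeight_pos t).le
  have h1 : 0 ≤ ∫ t in Set.Ioi x, (t - x) * gaussWeight t :=
    setIntegral_nonneg measurableSet_Ioi fun t ht =>
      mul_nonneg (sub_nonneg.2 (le_of_lt ht)) (gaussWeight_pos t).le
  have h2 : 0 ≤ ∫ t in Set.Ioi x, (t - x) ^ 2 * gaussWeight t :=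
    integral_nonneg fun t => mul_nonneg (sq_nonneg _) (gaussWeight_pos t).le
  have e3 : ∫ t in Set.Ioi x, (t - x) * gaussWeight t = gaussWeight x - x * G := by
    rw [hG, ← e1, ← integral_const_mul, ← integral_sub i1 (i0.const_mul x)]
    congr 1; funext t; ring
  have e4 : ∫ t in Set.Ioi x, (t - x) ^ 2 * gaussWeight t =
      (x * gaussWeight x + G) - 2 * x * gaussWeight x + x ^ 2 * G := by
    rw [hG, ← e2]
    conv_rhs => rw [← e1]
    have i3 : IntegrableOn (fun t => t ^ 2 * gaussWeight t - 2 * x * (t * gaussWeight t))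
        (Set.Ioi x) := i2.sub (i1.const_mul _)
    rw [← integral_const_mul, ← integral_const_mul, ← integral_sub i2 (i1.const_mul _),
      ← integral_add i3 (i0.const_mul _)]
    congr 1; funext t; ring
  rw [e3] at h1
  rw [e4] at h2
  have h3 : G ≤ 3 * gaussWeight x := by
    -- For `x ≥ 1` use `x G ≤ φ(x)`; for `x ≤ 1` compare `G ≤ √(2π) / 2 ≤ 3 / 2` and
    -- `φ(x) ≥ 1 / 2`.
    rcases le_total 1 x with h | h
    · nlinarith
    · have h4 : G ≤ ∫ t in Set.Ioi (0 : ℝ), gaussWeight t := by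
        rw [hG]
        exact setIntegral_mono_set integrable_gaussWeight.integrableOn
          (ae_of_all _ fun t => (gaussWeight_pos t).le)
          (Set.Ioi_subset_Ioi hx).eventuallyLE
      have h5 : ∫ t in Set.Ioi (0 : ℝ), gaussWeight t = √(Real.pi / (1 / 2)) / 2 :=
        integral_gaussian_Ioi (1 / 2)
      have h6 : √(Real.pi / (1 / 2)) ≤ 3 := by
        rw [Real.sqrt_le_iff]; constructor <;> linarith [Real.pi_lt_four]
      have h7 : 1 / 2 ≤ gaussWeight x := by
        have := Real.add_one_le_exp (-(1 / 2) * x ^ 2)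
        rw [gaussWeight]; nlinarith
      linarith
  refine ⟨h0, by linarith, h3, ?_⟩
  nlinarith

/-- The bound on the derivative of `x * f x` for the Stein solution `f`, on the side `x ≥ 0` and
with the Gaussian weight cleared. -/
lemma tail_bound {k : ℝ → ℝ} (hk : LipschitzWith 1 k) {c : ℝ} (hc : 0 ≤ c)
    (hkc : ∀ x, |k x| ≤ |x| + c) {x : ℝ} (hx : 0 ≤ x) :
    |(1 + x ^ 2) * (∫ t in Set.Ioi x, k t * gaussWeight t) - x * (k x * gaussWeight x)| ≤
      (4 + 4 * c) * gaussWeight x := by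
  obtain ⟨G, hG⟩ : ∃ G, G = ∫ t in Set.Ioi x, gaussWeight t := ⟨_, rfl⟩
  obtain ⟨m0, m1, m2, m3⟩ := mills hx hG
  have i0 := integrable_gaussWeight.integrableOn (s := Set.Ioi x)
  have i1 := integrable_id_mul_gaussWeight.integrableOn (s := Set.Ioi x)
  have ik := (integrable_lip_mul_gaussWeight hk).integrableOn (s := Set.Ioi x)
  have e1 := integral_Ioi_id_gaussWeight x
  have hw := gaussWeight_pos x
  have hkx := hkc x
  rw [abs_of_nonneg hx] at hkx
  -- Freeze `k` at the endpoint `x`; the Lipschitz error is controlled by the first tail moment.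
  have hE : |(∫ t in Set.Ioi x, k t * gaussWeight t) - k x * G| ≤ gaussWeight x - x * G := by
    have e3 : ∫ t in Set.Ioi x, (t - x) * gaussWeight t = gaussWeight x - x * G := by
      rw [hG, ← e1, ← integral_const_mul, ← integral_sub i1 (i0.const_mul x)]
      congr 1; funext t; ring
    have ixt : IntegrableOn (fun t => (t - x) * gaussWeight t) (Set.Ioi x) := by
      convert! i1.sub (i0.const_mul x) using 1
      funext t; simp only [Pi.sub_apply]; ring
    rw [← e3, hG, ← integral_const_mul, ← integral_sub ik (i0.const_mul _), ← Real.norm_eq_abs]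
    refine norm_integral_le_of_norm_le ixt ((ae_restrict_iff' measurableSet_Ioi).2
      (ae_of_all _ fun t ht => ?_))
    have h1 := hk.dist_le_mul t x
    simp only [Real.dist_eq, NNReal.coe_one, one_mul] at h1
    have ht' : x < t := ht
    rw [abs_of_nonneg (sub_nonneg.2 ht'.le)] at h1
    rw [← sub_mul, Real.norm_eq_abs, abs_mul, abs_of_pos (gaussWeight_pos t)]
    exact mul_le_mul_of_nonneg_right h1 (gaussWeight_pos t).le
  set E := (∫ t in Set.Ioi x, k t * gaussWeight t) - k x * G with hEdef
  set D := gaussWeight x - x * G with hD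
  have hD0 : 0 ≤ D := (abs_nonneg _).trans hE
  have hDw : D ≤ gaussWeight x := by nlinarith
  have hxD : x * D ≤ gaussWeight x := by nlinarith [sq_nonneg (x - 1)]
  have hx1 : 0 ≤ 1 + x ^ 2 := by positivity
  calc _ = |k x * G - k x * (x * D) + (1 + x ^ 2) * E| := by
        rw [hEdef, hD]; congr 1; ring
    _ ≤ (x + c) * G + (x + c) * (x * D) + (1 + x ^ 2) * D := by
        refine (abs_add_le _ _).trans (add_le_add ((abs_sub _ _).trans (add_le_add ?_ ?_)) ?_)
        · rw [abs_mul, abs_of_nonneg m0]; gcongr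
        · rw [abs_mul, abs_of_nonneg (mul_nonneg hx hD0)]; gcongr
        · rw [abs_mul, abs_of_nonneg hx1]; gcongr
    _ ≤ _ := by nlinarith

lemma integral_gaussWeight : ∫ t, gaussWeight t = √(2 * Real.pi) := by
  have := integral_gaussian (1 / 2)
  rw [show 2 * Real.pi = Real.pi / (1 / 2) by ring, ← this]; rfl

/-- The additive constant is `E|Z|`. -/
lemma centered_abs_le {h : ℝ → ℝ} (hh : LipschitzWith 1 h) (x : ℝ) :
    |h x - ∫ t, h t ∂(gaussianReal 0 1)| ≤
      |x| + (√(2 * Real.pi))⁻¹ * ∫ t, |t * gaussWeight t| := by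
  have hZ : 0 < √(2 * Real.pi) := Real.sqrt_pos.2 (by positivity)
  have ih := integrable_lip_mul_gaussWeight hh
  have e : h x - ∫ t, h t ∂(gaussianReal 0 1) =
      (√(2 * Real.pi))⁻¹ * ∫ t, (h x - h t) * gaussWeight t := by
    rw [integral_comp_eq_gaussWeight]
    simp only [sub_mul]
    rw [integral_sub (integrable_gaussWeight.const_mul _) ih, integral_const_mul,
      integral_gaussWeight]
    field_simp
  have e2 : |x| + (√(2 * Real.pi))⁻¹ * ∫ t, |t * gaussWeight t| =
      (√(2 * Real.pi))⁻¹ * ∫ t, (|x| * gaussWeight t + |t * gaussWeight t|) := by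
    rw [integral_add (integrable_gaussWeight.const_mul _) integrable_id_mul_gaussWeight.abs,
      integral_const_mul, integral_gaussWeight]
    field_simp
  rw [e, e2, abs_mul, abs_of_pos (inv_pos.2 hZ)]
  refine mul_le_mul_of_nonneg_left ?_ (inv_pos.2 hZ).le
  rw [← Real.norm_eq_abs]
  refine norm_integral_le_of_norm_le ((integrable_gaussWeight.const_mul _).add
    integrable_id_mul_gaussWeight.abs) (ae_of_all _ fun t => ?_)
  have h1 := hh.dist_le_mul x t
  simp only [Real.dist_eq, NNReal.coe_one, one_mul] at h1
  have h2 := abs_sub x t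
  rw [Real.norm_eq_abs, abs_mul, abs_mul, abs_of_pos (gaussWeight_pos t), ← add_mul]
  exact mul_le_mul_of_nonneg_right (h1.trans h2) (gaussWeight_pos t).le

/-- Here `g = f'`. Since `g x = h x - E h(Z) + x * f x`, it suffices that `x * f x` is Lipschitz,
so no differentiability of `h` is needed. -/
lemma exists_stein_solution : ∃ B : ℝ, 0 ≤ B ∧ ∀ h : ℝ → ℝ, LipschitzWith 1 h →
    ∃ f g : ℝ → ℝ, (∀ x, HasDerivAt f (g x) x) ∧
      (∀ x, h x - ∫ t, h t ∂(gaussianReal 0 1) = g x - x * f x) ∧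
      ∀ x y, |g x - g y| ≤ B * |x - y| := by
  set c : ℝ := (√(2 * Real.pi))⁻¹ * ∫ t, |t * gaussWeight t| with hc
  have hc0 : 0 ≤ c := mul_nonneg (by positivity) (integral_nonneg fun t => abs_nonneg _)
  refine ⟨1 + (4 + 4 * c), by positivity, fun h hh => ?_⟩
  set m := ∫ t, h t ∂(gaussianReal 0 1) with hm
  set k : ℝ → ℝ := fun x => h x - m with hkdef
  have hk : LipschitzWith 1 k := by
    refine LipschitzWith.of_dist_le_mul fun x y => ?_
    have := hh.dist_le_mul x y
    simpa [hkdef, Real.dist_eq] using this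
  have hkc : ∀ x, |k x| ≤ |x| + c := fun x => centered_abs_le hh x
  have ik := integrable_lip_mul_gaussWeight hk
  have hk0 : ∫ t, k t * gaussWeight t = 0 := by
    have hZ : 0 < √(2 * Real.pi) := Real.sqrt_pos.2 (by positivity)
    simp only [hkdef, sub_mul]
    rw [integral_sub (integrable_lip_mul_gaussWeight hh) (integrable_gaussWeight.const_mul _),
      integral_const_mul, integral_gaussWeight, hm, integral_comp_eq_gaussWeight]
    field_simp; ring
  set F : ℝ → ℝ := fun x => ∫ t in Set.Iic x, k t * gaussWeight t with hF
  have hFd : ∀ x, HasDerivAt F (k x * gaussWeight x) x := by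
    intro x
    have hcont : Continuous fun t => k t * gaussWeight t :=
      hk.continuous.mul gaussWeight_continuous
    have h1 : F = fun x => F 0 + ∫ t in (0 : ℝ)..x, k t * gaussWeight t := by
      funext x
      rw [← intervalIntegral.integral_Iic_sub_Iic ik.integrableOn ik.integrableOn]
      simp [hF]
    rw [h1]
    exact (hcont.integral_hasStrictDerivAt 0 x).hasDerivAt.const_add _
  have hbound : ∀ x, |(1 + x ^ 2) * F x + x * (k x * gaussWeight x)| ≤
      (4 + 4 * c) * gaussWeight x := by
    intro x
    rcases le_total 0 x with hx | hx
    -- The total integral of `k φ` is `0`, so `F` is also minus the upper tail integral.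
    · have h1 : F x = -∫ t in Set.Ioi x, k t * gaussWeight t := by
        have := intervalIntegral.integral_Iic_add_Ioi (b := x) ik.integrableOn ik.integrableOn
        rw [hk0] at this
        simp only [hF]; linarith
      rw [h1, ← abs_neg]
      convert tail_bound hk hc0 hkc hx using 2
      ring
    · have h1 : F x = ∫ t in Set.Ioi (-x), k (-t) * gaussWeight t := by
        have := integral_comp_neg_Ioi (-x) (fun t => k t * gaussWeight t)
        simp only [gaussWeight_neg, neg_neg] at this
        rw [this]
      have hk' : LipschitzWith 1 fun t => k (-t) := by
        refine LipschitzWith.of_dist_le_mul fun x y => ?_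
        have := hk.dist_le_mul (-x) (-y)
        rwa [dist_neg_neg] at this
      have h2 := tail_bound hk' hc0 (fun t => by simpa using hkc (-t)) (neg_nonneg.2 hx)
      rw [← h1, neg_neg, gaussWeight_neg] at h2
      convert h2 using 2
      ring
  have hfd : ∀ x, HasDerivAt (fun x => F x / gaussWeight x) (k x + x * (F x / gaussWeight x)) x := by
    intro x
    have hw := (gaussWeight_pos x).ne'
    convert! (hFd x).div (gaussWeight_hasDerivAt x) hw using 1
    field_simp; ring
  refine ⟨fun x => F x / gaussWeight x, fun x => k x + x * (F x / gaussWeight x), hfd,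
    fun x => by simp [hkdef], fun x y => ?_⟩
  have hud : ∀ x, HasDerivAt (fun x => x * (F x / gaussWeight x))
      ((1 + x ^ 2) * (F x / gaussWeight x) + x * k x) x := by
    intro x
    convert! (hasDerivAt_id x).mul (hfd x) using 1
    simp only [id]; ring
  have hub : ∀ x, ‖(1 + x ^ 2) * (F x / gaussWeight x) + x * k x‖ ≤ 4 + 4 * c := by
    intro x
    have hw := gaussWeight_pos x
    have := hbound x
    rw [show (1 + x ^ 2) * F x + x * (k x * gaussWeight x) =
      ((1 + x ^ 2) * (F x / gaussWeight x) + x * k x) * gaussWeight x by field_simp,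
      abs_mul, abs_of_pos hw] at this
    exact le_of_mul_le_mul_right this hw
  have h1 := Convex.norm_image_sub_le_of_norm_hasDerivWithin_le (s := Set.univ)
    (fun x _ => (hud x).hasDerivWithinAt) (fun x _ => hub x) convex_univ
    (Set.mem_univ y) (Set.mem_univ x)
  have h2 := hk.dist_le_mul x y
  simp only [Real.dist_eq, NNReal.coe_one, Real.norm_eq_abs] at h1 h2
  calc _ = |(k x - k y) + (x * (F x / gaussWeight x) - y * (F y / gaussWeight y))| := by
        congr 1; ring
    _ ≤ _ := (abs_add_le _ _).trans (by linarith)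

/-! ### Combining the two sides -/

lemma abs_sub_le_of_hasDerivAt {f g : ℝ → ℝ} (hf : ∀ x, HasDerivAt f (g x) x) {M : ℝ}
    {x d : ℝ} (hd : 0 ≤ d) (hM : ∀ y ∈ Set.Icc x (x + d), |g y| ≤ M) :
    |f (x + d) - f x| ≤ M * d := by
  have := Convex.norm_image_sub_le_of_norm_hasDerivWithin_le (s := Set.Icc x (x + d))
    (fun y _ => (hf y).hasDerivWithinAt) hM (convex_Icc _ _)
    (Set.left_mem_Icc.2 (by linarith)) (Set.right_mem_Icc.2 (by linarith))
  simpa [abs_of_nonneg hd] using this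

lemma taylor_bounds {f g : ℝ → ℝ} (hf : ∀ x, HasDerivAt f (g x) x) {B : ℝ} (hB : 0 ≤ B)
    (hg : ∀ x y, |g x - g y| ≤ B * |x - y|) (x : ℝ) {d : ℝ} (hd : 0 ≤ d) :
    |(f (x + d + d) - f (x + d)) - (f (x + d) - f x)| ≤ B * d ^ 2 ∧
      |f (x + d) - f x - d * g x| ≤ B * d ^ 2 := by
  constructor
  · have h1 : ∀ y, HasDerivAt (fun y => f (y + d) - f y) (g (y + d) - g y) y := fun y =>
      ((hf (y + d)).comp_add_const y d).sub (hf y)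
    have h2 := abs_sub_le_of_hasDerivAt h1 (x := x) hd (M := B * d) fun y _ => by
      simpa [abs_of_nonneg hd] using hg (y + d) y
    exact h2.trans (le_of_eq (by ring))
  · have h1 : ∀ y, HasDerivAt (fun y => f y - y * g x) (g y - g x) y := fun y => by
      have := (hf y).sub ((hasDerivAt_id y).mul_const (g x))
      rw [one_mul] at this
      exact this
    have h2 := abs_sub_le_of_hasDerivAt h1 (x := x) hd (M := B * d) fun y hy => by
      refine (hg y x).trans (mul_le_mul_of_nonneg_left ?_ hB)
      rw [abs_of_nonneg (by linarith [hy.1])]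
      linarith [hy.2]
    calc _ = |f (x + d) - (x + d) * g x - (f x - x * g x)| := by congr 1; ring
      _ ≤ _ := h2.trans (le_of_eq (by ring))

lemma walkExp_const (a b c : ℝ) (n : ℕ) : ∀ u, walkExp a b n (fun _ => c) u = c := by
  induction n with
  | zero => intro u; rfl
  | succ n ih => intro u; rw [walkExp, ih, ih]; ring

/-- Both identities are the Stein identity without error, for `f(s) = 1` and `f(s) = s`. -/
lemma walk_moments {a b L p : ℝ} (ha : a ∈ Set.Icc (0 : ℝ) 1) (hb : b ∈ Set.Icc (0 : ℝ) 1)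
    (hL1 : 1 ≤ L) (hL : |a - b| * L + 1 = L) (hp : p * a + (1 - p) * b = p)
    (hpI : p ∈ Set.Icc (0 : ℝ) 1) (n : ℕ) :
    walkExp a b n (fun s => s) p = n * p ∧
      walkExp a b n (fun s => s ^ 2) p - (n * p) ^ 2 = walkVar a b n p := by
  have h1 := walkExp_stein ha hb hL1 hL hp (K := 0) n (fun _ => 1) (fun s => by simp) p hpI
  have h2 := walkExp_stein ha hb hL1 hL hp (K := 0) n (fun s => s) (fun s => by simp) p hpI
  simp only [sub_self, mul_zero, zero_mul, sub_zero, mul_one, walkExp_const, abs_nonpos_iff,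
    add_sub_cancel_left] at h1 h2
  have e1 := walkExp_lin a b 1 (-(n * p)) n (fun s => s) (fun _ => 1) p
  have e2 := walkExp_lin a b 1 (-(n * p)) n (fun s => s ^ 2) (fun s => s) p
  have f1 : (fun s : ℝ => 1 * s + -(n * p) * 1) = fun s => s - n * p := by funext s; ring
  have f2 : (fun s : ℝ => 1 * s ^ 2 + -(n * p) * s) = fun s => (s - n * p) * s := by
    funext s; ring
  rw [f1, h1, walkExp_const] at e1
  rw [f2] at e2
  have hm : walkExp a b n (fun s => s) p = n * p := by linarith
  refine ⟨hm, ?_⟩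
  rw [hm] at e2
  linarith

/-- The Stein identity applied to `s ↦ f((s - n p) / σ)`, with differences replaced by the
derivative `g` of `f`. -/
lemma walk_stein_error {a b L p : ℝ} (ha : a ∈ Set.Icc (0 : ℝ) 1) (hb : b ∈ Set.Icc (0 : ℝ) 1)
    (hL1 : 1 ≤ L) (hL : |a - b| * L + 1 = L) (hp : p * a + (1 - p) * b = p)
    (hpI : p ∈ Set.Icc (0 : ℝ) 1) (n : ℕ) {f g : ℝ → ℝ} (hf : ∀ x, HasDerivAt f (g x) x)
    {B : ℝ} (hB : 0 ≤ B) (hg : ∀ x y, |g x - g y| ≤ B * |x - y|) {σ : ℝ} (hσ : 0 < σ)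
    (hσv : walkVar a b n p = σ ^ 2) :
    σ * |walkExp a b n (fun s => g ((s - n * p) / σ) - (s - n * p) / σ * f ((s - n * p) / σ)) p| ≤
      B + n * ((L * ((L + L ^ 2) * L) + L ^ 3 * L) * (B * (1 / σ) ^ 2)) := by
  have hstep : ∀ s : ℝ, (s + 1 - n * p) / σ = (s - n * p) / σ + 1 / σ := fun s => by ring
  have hd : 0 ≤ 1 / σ := by positivity
  have h1 := walkExp_stein ha hb hL1 hL hp n (fun s => f ((s - n * p) / σ))
    (K := B * (1 / σ) ^ 2) (fun s => by
      simp only [hstep]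
      exact (taylor_bounds hf hB hg _ hd).1) p hpI
  have h2 := walkExp_abs_le ha hb n (K := B * (1 / σ) ^ 2)
    (fun s => (f ((s + 1 - n * p) / σ) - f ((s - n * p) / σ)) - 1 / σ * g ((s - n * p) / σ))
    (fun s => by
      simp only [hstep]
      exact (taylor_bounds hf hB hg _ hd).2) p hpI
  have e1 := walkExp_lin a b 1 (-(1 / σ)) n
    (fun s => f ((s + 1 - n * p) / σ) - f ((s - n * p) / σ)) (fun s => g ((s - n * p) / σ)) p
  have f1 : (fun s : ℝ => 1 * (f ((s + 1 - n * p) / σ) - f ((s - n * p) / σ)) +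
      -(1 / σ) * g ((s - n * p) / σ)) =
      fun s => (f ((s + 1 - n * p) / σ) - f ((s - n * p) / σ)) - 1 / σ * g ((s - n * p) / σ) := by
    funext s; ring
  rw [f1] at e1
  have e2 := walkExp_lin a b 1 (-(1 / σ)) n
    (fun s => g ((s - n * p) / σ)) (fun s => (s - n * p) * f ((s - n * p) / σ)) p
  have f2 : (fun s : ℝ => 1 * g ((s - n * p) / σ) +
      -(1 / σ) * ((s - n * p) * f ((s - n * p) / σ))) =
      fun s => g ((s - n * p) / σ) - (s - n * p) / σ * f ((s - n * p) / σ) := by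
    funext s; ring
  rw [f2] at e2
  rw [sub_self, mul_zero, zero_mul, sub_zero, hσv] at h1
  rw [e1] at h2
  rw [e2]
  set X := walkExp a b n (fun s => (s - n * p) * f ((s - n * p) / σ)) p
  set Y := walkExp a b n (fun s => f ((s + 1 - n * p) / σ) - f ((s - n * p) / σ)) p
  set W := walkExp a b n (fun s => g ((s - n * p) / σ)) p
  calc _ = |σ * (1 * W + -(1 / σ) * X)| := by rw [abs_mul, abs_of_pos hσ]
    _ = |-(σ ^ 2 * (1 * Y + -(1 / σ) * W)) - (X - σ ^ 2 * Y)| := by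
        congr 1; field_simp; ring
    _ ≤ σ ^ 2 * (B * (1 / σ) ^ 2) + _ := by
        refine (abs_sub _ _).trans (add_le_add ?_ h1)
        rw [abs_neg, abs_mul, abs_of_nonneg (sq_nonneg σ)]
        gcongr
    _ = _ := by field_simp

/-- **Proposition A.1 (quantitative CLT for two-state chains).**  For a stationary
(reversible) two-state Markov chain with `p = P[X_1 = 1] ∈ (0,1)` and
`β = P[X_2 ≠ Y_2 | X_1 = 1, Y_1 = 0] < 1` (`Y` an independent copy), there is a
constant `C` depending only on the law of the chain such that for all `n` with
`Var(V_n) > 0` and all `1`-Lipschitz `h : ℝ → ℝ`,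
`|E[h((V_n − E V_n)/√Var V_n)] − E[h(Z)]| ≤ C/√n`, `Z` standard normal. -/
theorem two_state_chain_wasserstein_clt (q : Bool → Bool → ℝ)
    (hq0 : ∀ x y, 0 ≤ q x y) (hq1 : ∀ x, q x true + q x false = 1)
    (p : ℝ) (hp0 : 0 < p) (hp1 : p < 1)
    (hstat : p * q true true + (1 - p) * q false true = p)
    (hbeta : q true true * q false false + q true false * q false true < 1) :
    ∃ C : ℝ, ∀ n : ℕ, 1 ≤ n →
      0 < chainExp n p q (fun f => (vCount n f : ℝ) ^ 2) -
          chainExp n p q (fun f => (vCount n f : ℝ)) ^ 2 →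
      ∀ h : ℝ → ℝ, LipschitzWith 1 h →
        |chainExp n p q (fun f =>
              h (((vCount n f : ℝ) - chainExp n p q (fun g => (vCount n g : ℝ))) /
                Real.sqrt (chainExp n p q (fun g => (vCount n g : ℝ) ^ 2) -
                  chainExp n p q (fun g => (vCount n g : ℝ)) ^ 2))) -
            ∫ t, h t ∂(gaussianReal 0 1)| ≤
          C / Real.sqrt n := by
  obtain ⟨B, hB, hstein⟩ := exists_stein_solution
  have hE : ∀ (n : ℕ) (G : ℝ → ℝ), chainExp n p q (fun f => G (vCount n f)) =
      walkExp (q true true) (q false true) n G p := fun n G => by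
    have := sum_chainProb q hq1 n (statInit p) (by simp [statInit]) G
    simpa [chainExp, statInit] using this
  set a := q true true with ha_def
  set b := q false true with hb_def
  have ha : a ∈ Set.Icc (0 : ℝ) 1 := ⟨hq0 _ _, by linarith [hq1 true, hq0 true false]⟩
  have hb : b ∈ Set.Icc (0 : ℝ) 1 := ⟨hq0 _ _, by linarith [hq1 false, hq0 false false]⟩
  rw [show q false false = 1 - b by linarith [hq1 false],
    show q true false = 1 - a by linarith [hq1 true]] at hbeta
  have hpI : p ∈ Set.Icc (0 : ℝ) 1 := ⟨hp0.le, hp1.le⟩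
  -- Were `|a - b| = 1`, the pair `(a, b)` would be `(1, 0)` or `(0, 1)`, where `β = 1`.
  have hl : |a - b| < 1 := by
    obtain ⟨ha0, ha1⟩ := ha
    obtain ⟨hb0, hb1⟩ := hb
    rw [abs_lt]
    constructor
    · by_contra hcon
      have h1 : a = 0 := by linarith
      have h2 : b = 1 := by linarith
      rw [h1, h2] at hbeta; norm_num at hbeta
    · by_contra hcon
      have h1 : a = 1 := by linarith
      have h2 : b = 0 := by linarith
      rw [h1, h2] at hbeta; norm_num at hbeta
  obtain ⟨L, hLdef⟩ : ∃ L, L = 1 / (1 - |a - b|) := ⟨_, rfl⟩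
  have hl0 : 0 < 1 - |a - b| := by linarith
  have hL : |a - b| * L + 1 = L := by rw [hLdef]; field_simp; ring
  have hL0 : 0 < L := by rw [hLdef]; positivity
  have hL1 : 1 ≤ L := by nlinarith [abs_nonneg (a - b)]
  set v : ℝ := (1 / (2 * L)) ^ 2 * (p * (1 - p) * (1 - (a - b) ^ 2)) with hv
  have hv0 : 0 < v := by
    have h1 : (a - b) ^ 2 < 1 := by
      rw [← sq_abs]; exact pow_lt_one₀ (abs_nonneg _) hl two_ne_zero
    have h2 : 0 < 1 - p := by linarith
    have h3 : 0 < 1 - (a - b) ^ 2 := by linarith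
    positivity
  set D : ℝ := L * ((L + L ^ 2) * L) + L ^ 3 * L with hD
  have hD0 : 0 < D := by positivity
  refine ⟨(B + D * B / v) / √v, fun n hn hvar h hh => ?_⟩
  obtain ⟨hm1, hm2⟩ := walk_moments ha hb hL1 hL hstat hpI n
  have hE1 := hE n (fun s => s)
  have hE2 := hE n (fun s => s ^ 2)
  rw [hm1] at hE1
  simp only [hE1, hE2, hm2] at hvar ⊢
  have hE3 := hE n (fun s => h ((s - n * p) / √(walkVar a b n p)))
  rw [hE3]
  obtain ⟨f, g, hf, hfg, hg⟩ := hstein h hh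
  set m := ∫ t, h t ∂(gaussianReal 0 1)
  have hσ : 0 < √(walkVar a b n p) := Real.sqrt_pos.2 hvar
  have hσ2 : walkVar a b n p = √(walkVar a b n p) ^ 2 := (Real.sq_sqrt hvar.le).symm
  have hlow : n * v ≤ walkVar a b n p := walkVar_lower hp0.le hp1.le hL1 hL hstat n
  have herr := walk_stein_error ha hb hL1 hL hstat hpI n hf hB hg hσ hσ2
  have hlow2 : √n * √v ≤ √(walkVar a b n p) := by
    rw [← Real.sqrt_mul (Nat.cast_nonneg n)]; exact Real.sqrt_le_sqrt hlow
  simp only [← hfg] at herr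
  rw [walkExp_sub a b n (fun s => h ((s - n * p) / √(walkVar a b n p))) (fun _ => m),
    walkExp_const] at herr
  set σ := √(walkVar a b n p)
  have hn0 : (0 : ℝ) < n := by exact_mod_cast hn
  have hsn : 0 < √(n : ℝ) := Real.sqrt_pos.2 hn0
  have hsv : 0 < √v := Real.sqrt_pos.2 hv0
  have hbd : B + n * (D * (B * (1 / σ) ^ 2)) ≤ B + D * B / v := by
    have h1 : n * (1 / σ) ^ 2 ≤ 1 / v := by
      rw [one_div, inv_pow, ← hσ2, ← div_eq_mul_inv, div_le_div_iff₀ hvar hv0]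
      linarith
    have h2 := mul_le_mul_of_nonneg_left h1 (mul_nonneg hD0.le hB)
    calc _ = B + D * B * (n * (1 / σ) ^ 2) := by ring
      _ ≤ B + D * B * (1 / v) := by linarith
      _ = _ := by ring
  rw [div_div, le_div_iff₀ (by positivity), mul_comm]
  refine le_trans ?_ (herr.trans hbd)
  exact mul_le_mul_of_nonneg_right (by linarith) (abs_nonneg _)
end
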